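/- For every n ≥ 2 and all p ≠ q with 1 ≤ p, q ≤ n, the number of edges of the associahedron graph K_n between the oriented classes Θ_{T_p} and Θ_{T_q} satisfies |E_{p,q}| ≥ |Θ_{T_p}|·|Θ_{T_q}| / C_n, where C_n = |V(K_n)| is the total number of triangulations of the convex (n+2)-gon. -/

import Mathlib

open Finset

/-- `x` lies strictly between `a` and `b` in cyclic (counterclockwise) order
on the vertices `0, 1, …, m-1` of a convex `m`-gon. -/
def CycBtw {m : ℕ} (a b x : Fin m) : Prop :=
  0 < (x - a).val ∧ (x - a).val < (b - a).val

/-- `a` and `b` are adjacent (cyclically consecutive) vertices of the convex `m`-gon. -/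
def PolyAdj {m : ℕ} (a b : Fin m) : Prop :=
  (b - a).val = 1 ∨ (a - b).val = 1

/-- `e` is a side of the convex `m`-gon. -/
def IsSide {m : ℕ} (e : Sym2 (Fin m)) : Prop :=
  ∃ a b : Fin m, e = s(a, b) ∧ PolyAdj a b

/-- `e` is a diagonal of the convex `m`-gon: a pair of distinct non-adjacent vertices. -/
def IsDiagonal {m : ℕ} (e : Sym2 (Fin m)) : Prop :=
  ¬ e.IsDiag ∧ ∀ a b : Fin m, e = s(a, b) → ¬ PolyAdj a b

/-- Two chords cross iff exactly one endpoint of one lies strictly between the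
endpoints of the other (for every representation of the endpoints). -/
def Crosses {m : ℕ} (e f : Sym2 (Fin m)) : Prop :=
  ∀ a b : Fin m, e = s(a, b) →
    ∃ c d : Fin m, f = s(c, d) ∧ Xor' (CycBtw a b c) (CycBtw a b d)

/-- A triangulation of the convex `(n+2)`-gon: a maximal set of pairwise
non-crossing diagonals. -/
def IsTriangulation (n : ℕ) (t : Finset (Sym2 (Fin (n + 2)))) : Prop :=
  (∀ e ∈ t, IsDiagonal e) ∧
  (∀ e ∈ t, ∀ f ∈ t, ¬ Crosses e f) ∧
  (∀ e, IsDiagonal e → (∀ f ∈ t, ¬ Crosses e f) → e ∈ t)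

/-- The type of triangulations of the convex `(n+2)`-gon. -/
def Triangulation (n : ℕ) : Type :=
  {t : Finset (Sym2 (Fin (n + 2))) // IsTriangulation n t}

instance (n : ℕ) : DecidableEq (Triangulation n) := fun a b =>
  decidable_of_iff (a.val = b.val) Subtype.ext_iff.symm

noncomputable instance (n : ℕ) : Fintype (Triangulation n) := by
  classical exact Subtype.fintype _

/-- The associahedron graph `K_n`: vertices are the triangulations of the convex
`(n+2)`-gon, with an edge between two triangulations iff they differ in exactly
one diagonal (a flip). -/
def assocGraph (n : ℕ) : SimpleGraph (Triangulation n) where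
  Adj s t := (s.val \ t.val).card = 1 ∧ (t.val \ s.val).card = 1
  symm := ⟨fun s t h => ⟨h.2, h.1⟩⟩
  loopless := ⟨fun s h => by simp at h⟩

/-- The set of edges of `G` with exactly one endpoint in `S`. -/
def edgeBoundary {V : Type*} (G : SimpleGraph V) (S : Set V) : Set (Sym2 V) :=
  {e | e ∈ G.edgeSet ∧ ∃ u v : V, e = s(u, v) ∧ u ∈ S ∧ v ∉ S}

/-- `e` is an edge of the triangulation `t`: a side of the polygon or one of the
diagonals of `t`. -/
def EdgeOfT {n : ℕ} (t : Triangulation n) (e : Sym2 (Fin (n + 2))) : Prop :=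
  IsSide e ∨ e ∈ t.val

/-- The triangle with vertices `a`, `b`, `c` is one of the `n` triangles of the
triangulation `t` (for pairwise non-crossing sets of diagonals this holds exactly
when all three chords are edges of `t`). -/
def IsTriangleOf {n : ℕ} (t : Triangulation n) (a b c : Fin (n + 2)) : Prop :=
  a ≠ b ∧ b ≠ c ∧ a ≠ c ∧ EdgeOfT t s(a, b) ∧ EdgeOfT t s(b, c) ∧ EdgeOfT t s(a, c)

open scoped Fin.NatCast in
/-- The oriented class `Θ_{T_p}` (w.r.t. the special side `e* = {0, n+1}`): the set of
triangulations of the convex `(n+2)`-gon having the triangle `T_p = {0, p, n+1}` as one of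
their triangles. -/
def orientedClass (n p : ℕ) : Set (Triangulation n) :=
  {t | IsTriangleOf t (0 : Fin (n + 2)) ((p : ℕ) : Fin (n + 2)) (((n + 1 : ℕ)) : Fin (n + 2))}

/-- The set `E_{p,q}` of edges of `K_n` with one endpoint in `Θ_{T_p}` and the other
in `Θ_{T_q}`. -/
def edgesBetween (n p q : ℕ) : Set (Sym2 (Triangulation n)) :=
  {e | e ∈ (assocGraph n).edgeSet ∧
    ∃ u v : Triangulation n, e = s(u, v) ∧ u ∈ orientedClass n p ∧ v ∈ orientedClass n q}

/-- The boundary set `∂_{p,q}`: triangulations in `Θ_{T_p}` having a neighbor in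
`Θ_{T_q}`. -/
def boundarySet (n p q : ℕ) : Set (Triangulation n) :=
  {t | t ∈ orientedClass n p ∧
    ∃ t' : Triangulation n, t' ∈ orientedClass n q ∧ (assocGraph n).Adj t t'}

/-! ### Maximal noncrossing families of chords on an interval of naturals -/

/-- Two chords `(a,b)`, `(c,d)` (with `a < b`, `c < d`) cross. -/
def Cr (a b c d : ℕ) : Prop := (a < c ∧ c < b ∧ b < d) ∨ (c < a ∧ a < d ∧ d < b)

/-- Maximal noncrossing family of chords (sides included) on the vertices `i, …, j`. -/
def IsMT (i j : ℕ) (F : Finset (ℕ × ℕ)) : Prop :=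
  ∀ a b, (a, b) ∈ F ↔ i ≤ a ∧ a < b ∧ b ≤ j ∧ ∀ c d, (c, d) ∈ F → ¬ Cr a b c d

open Classical in
/-- The finset of all maximal noncrossing families. -/
noncomputable def MT (i j : ℕ) : Finset (Finset (ℕ × ℕ)) :=
  ((range (j + 1) ×ˢ range (j + 1)).powerset).filter (IsMT i j)

lemma mem_MT {i j : ℕ} {F : Finset (ℕ × ℕ)} : F ∈ MT i j ↔ IsMT i j F := by
  classical
  simp only [MT, mem_filter, mem_powerset, and_iff_right_iff_imp]
  rintro h ⟨a, b⟩ hab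
  have := (h a b).1 hab
  simp only [mem_product, mem_range]
  omega

/-- Restriction of a family to a subinterval. -/
def res (i j : ℕ) (F : Finset (ℕ × ℕ)) : Finset (ℕ × ℕ) :=
  F.filter (fun x => i ≤ x.1 ∧ x.2 ≤ j)

lemma mem_res {i j a b : ℕ} {F : Finset (ℕ × ℕ)} :
    (a, b) ∈ res i j F ↔ (a, b) ∈ F ∧ i ≤ a ∧ b ≤ j := by
  simp [res]

/-- Gluing. -/
def glue (i j : ℕ) (A B : Finset (ℕ × ℕ)) : Finset (ℕ × ℕ) := insert (i, j) (A ∪ B)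

lemma mem_glue {i j a b : ℕ} {A B : Finset (ℕ × ℕ)} :
    (a, b) ∈ glue i j A B ↔ (a = i ∧ b = j) ∨ (a, b) ∈ A ∨ (a, b) ∈ B := by
  simp [glue]

lemma IsMT.bd {i j a b : ℕ} {F : Finset (ℕ × ℕ)} (h : IsMT i j F) (hab : (a, b) ∈ F) :
    i ≤ a ∧ a < b ∧ b ≤ j :=
  ⟨((h a b).1 hab).1, ((h a b).1 hab).2.1, ((h a b).1 hab).2.2.1⟩

lemma IsMT.nc {i j a b c d : ℕ} {F : Finset (ℕ × ℕ)} (h : IsMT i j F) (hab : (a, b) ∈ F)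
    (hcd : (c, d) ∈ F) : ¬ Cr a b c d :=
  ((h a b).1 hab).2.2.2 c d hcd

lemma IsMT.base {i j : ℕ} {F : Finset (ℕ × ℕ)} (h : IsMT i j F) (hij : i < j) : (i, j) ∈ F := by
  refine (h i j).2 ⟨le_rfl, hij, le_rfl, fun c d hcd => ?_⟩
  have := h.bd hcd
  unfold Cr; omega

lemma IsMT.side {i j a : ℕ} {F : Finset (ℕ × ℕ)} (h : IsMT i j F) (ha : i ≤ a) (hb : a + 1 ≤ j) :
    (a, a + 1) ∈ F := by
  refine (h _ _).2 ⟨ha, by omega, hb, fun c d hcd => ?_⟩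
  have := h.bd hcd
  unfold Cr; omega

lemma IsMT.res {i j i' j' : ℕ} {F : Finset (ℕ × ℕ)} (h : IsMT i j F) (hm : (i', j') ∈ F) :
    IsMT i' j' (res i' j' F) := by
  intro a b
  rw [mem_res]
  constructor
  · rintro ⟨hF, ha, hb⟩
    refine ⟨ha, (h.bd hF).2.1, hb, fun c d hcd => h.nc hF (mem_res.1 hcd).1⟩
  · rintro ⟨ha, hab, hb, H⟩
    refine ⟨(h a b).2 ⟨?_, hab, ?_, fun c d hcd hcr => ?_⟩, ha, hb⟩
    · have := h.bd hm; omega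
    · have := h.bd hm; omega
    · have h1 := h.nc hm hcd
      have h2 := h.bd hcd
      have h3 : ¬ (i' ≤ c ∧ d ≤ j') := fun h4 => H c d (mem_res.2 ⟨hcd, h4⟩) hcr
      unfold Cr at h1 hcr
      omega

lemma IsMT.glue {i p j : ℕ} {A B : Finset (ℕ × ℕ)} (hA : IsMT i p A) (hB : IsMT p j B)
    (hip : i < p) (hpj : p < j) : IsMT i j (glue i j A B) := by
  intro a b
  rw [mem_glue]
  constructor
  · intro h
    have hb : i ≤ a ∧ a < b ∧ b ≤ j := by
      rcases h with h | h | h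
      · omega
      · have := hA.bd h; omega
      · have := hB.bd h; omega
    refine ⟨hb.1, hb.2.1, hb.2.2, fun c d hcd => ?_⟩
    rw [mem_glue] at hcd
    rcases h with h | h | h <;> rcases hcd with h' | h' | h'
    · unfold Cr; omega
    · have := hA.bd h'; unfold Cr; omega
    · have := hB.bd h'; unfold Cr; omega
    · have := hA.bd h; unfold Cr; omega
    · exact hA.nc h h'
    · have := hA.bd h; have := hB.bd h'; unfold Cr; omega
    · have := hB.bd h; unfold Cr; omega
    · have := hB.bd h; have := hA.bd h'; unfold Cr; omega
    · exact hB.nc h h'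
  · rintro ⟨ha, hab, hb, H⟩
    by_cases h1 : b ≤ p
    · right; left
      exact (hA a b).2 ⟨ha, hab, h1, fun c d hcd => H c d (mem_glue.2 (Or.inr (Or.inl hcd)))⟩
    by_cases h2 : p ≤ a
    · right; right
      exact (hB a b).2 ⟨h2, hab, hb, fun c d hcd => H c d (mem_glue.2 (Or.inr (Or.inr hcd)))⟩
    left
    have h3 := H i p (mem_glue.2 (Or.inr (Or.inl (hA.base hip))))
    have h4 := H p j (mem_glue.2 (Or.inr (Or.inr (hB.base hpj))))
    unfold Cr at h3 h4
    omega

lemma res_glue_left {i p j : ℕ} {A B : Finset (ℕ × ℕ)} (hA : IsMT i p A) (hB : IsMT p j B)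
    (hpj : p < j) : res i p (glue i j A B) = A := by
  ext ⟨a, b⟩
  rw [mem_res, mem_glue]
  constructor
  · rintro ⟨h | h | h, h1, h2⟩
    · omega
    · exact h
    · have := hB.bd h; omega
  · intro h
    have := hA.bd h
    exact ⟨Or.inr (Or.inl h), by omega, by omega⟩

lemma res_glue_right {i p j : ℕ} {A B : Finset (ℕ × ℕ)} (hA : IsMT i p A) (hB : IsMT p j B)
    (hip : i < p) : res p j (glue i j A B) = B := by
  ext ⟨a, b⟩
  rw [mem_res, mem_glue]
  constructor
  · rintro ⟨h | h | h, h1, h2⟩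
    · omega
    · have := hA.bd h; omega
    · exact h
  · intro h
    have := hB.bd h
    exact ⟨Or.inr (Or.inr h), by omega, by omega⟩

lemma glue_res {i p j : ℕ} {F : Finset (ℕ × ℕ)} (h : IsMT i j F) (h1 : (i, p) ∈ F)
    (h2 : (p, j) ∈ F) : glue i j (res i p F) (res p j F) = F := by
  have b1 := h.bd h1
  have b2 := h.bd h2
  ext ⟨a, b⟩
  rw [mem_glue, mem_res, mem_res]
  constructor
  · rintro (⟨rfl, rfl⟩ | h | h)
    · exact h.base (by omega)
    · exact h.1
    · exact h.1
  · intro hab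
    have c1 := h.nc h1 hab
    have c2 := h.nc h2 hab
    have := h.bd hab
    unfold Cr at c1 c2
    by_cases h3 : b ≤ p
    · exact Or.inr (Or.inl ⟨hab, by omega, h3⟩)
    by_cases h4 : p ≤ a
    · exact Or.inr (Or.inr ⟨hab, h4, by omega⟩)
    left; omega

lemma IsMT.exists_apex {i j : ℕ} {F : Finset (ℕ × ℕ)} (h : IsMT i j F) (hij : i + 2 ≤ j) :
    ∃ p, i < p ∧ p < j ∧ (i, p) ∈ F ∧ (p, j) ∈ F := by
  classical
  have hne : ((range j).filter (fun p => (i, p) ∈ F)).Nonempty :=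
    ⟨i + 1, by simpa using ⟨by omega, h.side le_rfl (by omega)⟩⟩
  obtain ⟨p, hp, hmax⟩ := Finset.exists_max_image _ id hne
  simp only [mem_filter, mem_range, id] at hp hmax
  have hb := h.bd hp.2
  refine ⟨p, hb.2.1, hp.1, hp.2, (h p j).2 ⟨by omega, hp.1, le_rfl, fun c d hcd hcr => ?_⟩⟩
  have h1 := h.bd hcd
  have h2 := h.nc hp.2 hcd
  unfold Cr at hcr h2
  have h3 : c = i := by omega
  subst h3
  have := hmax d ⟨by omega, hcd⟩
  omega

/-- Families with the triangle `i, p, j`. -/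
noncomputable def AP (i p j : ℕ) : Finset (Finset (ℕ × ℕ)) :=
  (MT i j).filter (fun F => (i, p) ∈ F ∧ (p, j) ∈ F)

lemma mem_AP {i p j : ℕ} {F : Finset (ℕ × ℕ)} :
    F ∈ AP i p j ↔ IsMT i j F ∧ (i, p) ∈ F ∧ (p, j) ∈ F := by
  simp [AP, mem_MT]

lemma card_AP {i p j : ℕ} (hip : i < p) (hpj : p < j) :
    (AP i p j).card = (MT i p).card * (MT p j).card := by
  rw [← card_product]
  refine Finset.card_nbij' (fun F => (res i p F, res p j F)) (fun X => glue i j X.1 X.2) ?_ ?_ ?_ ?_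
  · intro F hF
    have hF := mem_AP.1 hF
    simp only [coe_product, Set.mem_prod, mem_coe, mem_MT]
    exact ⟨hF.1.res hF.2.1, hF.1.res hF.2.2⟩
  · rintro ⟨A, B⟩ hX
    simp only [coe_product, Set.mem_prod, mem_coe, mem_MT] at hX
    refine mem_AP.2 ⟨hX.1.glue hX.2 hip hpj, mem_glue.2 (Or.inr (Or.inl (hX.1.base hip))),
      mem_glue.2 (Or.inr (Or.inr (hX.2.base hpj)))⟩
  · intro F hF
    have hF := mem_AP.1 hF
    exact glue_res hF.1 hF.2.1 hF.2.2
  · rintro ⟨A, B⟩ hX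
    simp only [coe_product, Set.mem_prod, mem_coe, mem_MT] at hX
    exact Prod.ext (res_glue_left hX.1 hX.2 hpj) (res_glue_right hX.1 hX.2 hip)

lemma AP_unique {i p q j : ℕ} {F : Finset (ℕ × ℕ)} (h : F ∈ AP i p j) (h' : F ∈ AP i q j) :
    p = q := by
  rw [mem_AP] at h h'
  have a1 := h.1.nc h.2.1 h'.2.2
  have a2 := h.1.nc h.2.2 h'.2.1
  have a3 := h.1.bd h.2.1
  have a4 := h.1.bd h.2.2
  have a5 := h.1.bd h'.2.1
  have a6 := h.1.bd h'.2.2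
  unfold Cr at a1 a2
  omega

lemma card_MT_rec {i j : ℕ} (hij : i + 2 ≤ j) :
    (MT i j).card = ∑ p ∈ Ioo i j, (MT i p).card * (MT p j).card := by
  classical
  have : MT i j = (Ioo i j).biUnion (fun p => AP i p j) := by
    ext F
    simp only [mem_MT, mem_biUnion, mem_Ioo, mem_AP]
    constructor
    · intro h
      obtain ⟨p, h1, h2, h3, h4⟩ := h.exists_apex hij
      exact ⟨p, ⟨h1, h2⟩, h, h3, h4⟩
    · rintro ⟨p, -, h, -⟩
      exact h
  rw [this, card_biUnion]
  · refine sum_congr rfl fun p hp => ?_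
    rw [mem_Ioo] at hp
    exact card_AP hp.1 hp.2
  · intro p _ q _ hpq
    rw [Function.onFun, Finset.disjoint_left]
    exact fun F h h' => hpq (AP_unique h h')

lemma card_MT_one (i : ℕ) : (MT i (i + 1)).card = 1 := by
  rw [card_eq_one]
  refine ⟨{(i, i + 1)}, ?_⟩
  ext F
  rw [mem_MT, mem_singleton]
  constructor
  · intro h
    ext ⟨a, b⟩
    simp only [mem_singleton, Prod.mk.injEq]
    constructor
    · intro hab
      have := h.bd hab
      omega
    · rintro ⟨rfl, rfl⟩
      exact h.base (by omega)
  · rintro rfl a b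
    simp only [mem_singleton, Prod.mk.injEq, Cr]
    constructor
    · rintro ⟨rfl, rfl⟩
      exact ⟨le_rfl, by omega, le_rfl, by omega⟩
    · rintro ⟨h1, h2, h3, -⟩
      omega

lemma card_MT (m : ℕ) : ∀ i, (MT i (i + m + 1)).card = catalan m := by
  induction m using Nat.strong_induction_on with
  | _ m ih =>
    intro i
    cases m with
    | zero => simpa using card_MT_one i
    | succ m =>
      rw [card_MT_rec (by omega), catalan_succ, Fin.sum_univ_eq_sum_range
        (fun k => catalan k * catalan (m - k)) (m + 1)]
      symm
      refine Finset.sum_bij (fun k _ => i + k + 1) ?_ ?_ ?_ ?_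
      · intro k hk
        simp only [mem_range, mem_Ioo] at *
        omega
      · intro k _ k' _ h
        omega
      · intro p hp
        simp only [mem_Ioo] at hp
        exact ⟨p - i - 1, by simp only [mem_range]; omega, by omega⟩
      · intro k hk
        simp only [mem_range] at hk
        rw [ih k (by omega), show i + (m + 1) + 1 = (i + k + 1) + (m - k) + 1 by omega,
          ih (m - k) (by omega)]

lemma card_MT' {i j : ℕ} (h : i < j) : (MT i j).card = catalan (j - i - 1) := by
  rw [← card_MT (j - i - 1) i]
  congr 2
  omega

/-! ### Log-convexity of Catalan numbers -/

lemma catalan_pos' (m : ℕ) : 0 < catalan m := by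
  have := succ_mul_catalan_eq_centralBinom m
  have h := Nat.centralBinom_pos m
  by_contra h0
  have : catalan m = 0 := by omega
  simp_all

lemma catalan_step (m : ℕ) : (m + 2) * catalan (m + 1) = (4 * m + 2) * catalan m := by
  have h1 := succ_mul_catalan_eq_centralBinom m
  have h2 := succ_mul_catalan_eq_centralBinom (m + 1)
  have h3 := Nat.succ_mul_centralBinom_succ m
  rw [← h1, ← h2] at h3
  have : (m + 1) * ((m + 2) * catalan (m + 1)) = (m + 1) * ((4 * m + 2) * catalan m) := by
    linarith
  exact Nat.eq_of_mul_eq_mul_left (by omega) this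

lemma catalan_logconvex (k a d : ℕ) (hka : k ≤ a) :
    catalan (k + d) * catalan a ≤ catalan k * catalan (a + d) := by
  induction d with
  | zero => simp
  | succ d ih =>
    have h1 := catalan_step (k + d)
    have h2 := catalan_step (a + d)
    rw [← add_assoc, ← add_assoc]
    have key : (4 * (k + d) + 2) * (a + d + 2) ≤ (4 * (a + d) + 2) * (k + d + 2) := by
      nlinarith
    refine le_of_mul_le_mul_left ?_ (show 0 < (k + d + 2) * (a + d + 2) by positivity)
    calc (k + d + 2) * (a + d + 2) * (catalan (k + d + 1) * catalan a)
        = ((k + d + 2) * catalan (k + d + 1)) * (a + d + 2) * catalan a := by ring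
      _ = ((4 * (k + d) + 2) * (a + d + 2)) * (catalan (k + d) * catalan a) := by rw [h1]; ring
      _ ≤ ((4 * (a + d) + 2) * (k + d + 2)) * (catalan k * catalan (a + d)) :=
          Nat.mul_le_mul key ih
      _ = (k + d + 2) * catalan k * ((4 * (a + d) + 2) * catalan (a + d)) := by ring
      _ = (k + d + 2) * catalan k * ((a + d + 2) * catalan (a + d + 1)) := by rw [h2]
      _ = _ := by ring

/-! ### Translation between `Fin` chords and natural-number chords -/

lemma fin_sub_val {m : ℕ} (x a : Fin m) :
    (x - a).val = if a.val ≤ x.val then x.val - a.val else m + x.val - a.val := by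
  rw [Fin.val_sub]
  have := x.2
  have := a.2
  split_ifs with h
  · rw [show m - a.val + x.val = (x.val - a.val) + m by omega, Nat.add_mod_right,
      Nat.mod_eq_of_lt (by omega)]
  · rw [Nat.mod_eq_of_lt (by omega)]; omega

lemma cycBtw_lt {m : ℕ} {a b x : Fin m} (h : a.val < b.val) :
    CycBtw a b x ↔ a.val < x.val ∧ x.val < b.val := by
  unfold CycBtw
  rw [fin_sub_val, fin_sub_val]
  have := x.2
  have := b.2
  split_ifs <;> omega

lemma cycBtw_gt {m : ℕ} {a b x : Fin m} (h : a.val < b.val) :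
    CycBtw b a x ↔ x.val < a.val ∨ b.val < x.val := by
  unfold CycBtw
  rw [fin_sub_val, fin_sub_val]
  have := x.2
  have := b.2
  split_ifs <;> omega

lemma crosses_iff {m : ℕ} {a b c d : Fin m} (hab : a.val < b.val) (hcd : c.val < d.val) :
    Crosses s(a, b) s(c, d) ↔ Cr a b c d := by
  have key : ∀ a b : Fin m, (∃ c' d' : Fin m, s(c, d) = s(c', d') ∧
      Xor' (CycBtw a b c') (CycBtw a b d')) ↔ Xor' (CycBtw a b c) (CycBtw a b d) := by
    intro a b
    constructor
    · rintro ⟨c', d', h, hx⟩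
      rcases Sym2.eq_iff.1 h with ⟨rfl, rfl⟩ | ⟨rfl, rfl⟩
      · exact hx
      · exact hx.symm
    · intro h
      exact ⟨c, d, rfl, h⟩
  have : Crosses s(a, b) s(c, d) ↔
      Xor' (CycBtw a b c) (CycBtw a b d) ∧ Xor' (CycBtw b a c) (CycBtw b a d) := by
    unfold Crosses
    constructor
    · intro h
      exact ⟨(key a b).1 (h a b rfl), (key b a).1 (h b a Sym2.eq_swap)⟩
    · rintro ⟨h1, h2⟩ a' b' h
      rw [key]
      rcases Sym2.eq_iff.1 h with ⟨rfl, rfl⟩ | ⟨rfl, rfl⟩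
      · exact h1
      · exact h2
  rw [this, cycBtw_lt hab, cycBtw_lt hab, cycBtw_gt hab, cycBtw_gt hab]
  simp only [Cr, Xor', Xor]
  omega

lemma polyAdj_iff {n : ℕ} {a b : Fin (n + 2)} (hab : a.val < b.val) :
    PolyAdj a b ↔ b.val = a.val + 1 ∨ (a.val = 0 ∧ b.val = n + 1) := by
  unfold PolyAdj
  rw [fin_sub_val, fin_sub_val]
  have := b.2
  split_ifs <;> omega

lemma polyAdj_comm {m : ℕ} {a b : Fin m} : PolyAdj a b ↔ PolyAdj b a := by
  unfold PolyAdj; exact or_comm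

lemma isSide_iff {m : ℕ} {a b : Fin m} : IsSide s(a, b) ↔ PolyAdj a b := by
  constructor
  · rintro ⟨a', b', h, h'⟩
    rcases Sym2.eq_iff.1 h with ⟨rfl, rfl⟩ | ⟨rfl, rfl⟩
    · exact h'
    · exact polyAdj_comm.1 h'
  · intro h
    exact ⟨a, b, rfl, h⟩

lemma isDiagonal_iff {m : ℕ} {a b : Fin m} (hab : a.val < b.val) :
    IsDiagonal s(a, b) ↔ ¬ IsSide s(a, b) := by
  have : a ≠ b := by rintro rfl; omega
  unfold IsDiagonal IsSide
  simp only [Sym2.mk_isDiag_iff, this, not_false_eq_true, true_and]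
  push Not
  rfl

lemma sym2_rep {m : ℕ} (e : Sym2 (Fin m)) (h : ¬ e.IsDiag) :
    ∃ a b : Fin m, a.val < b.val ∧ e = s(a, b) := by
  induction e using Sym2.ind with
  | _ x y =>
    rw [Sym2.mk_isDiag_iff] at h
    rcases lt_trichotomy x.val y.val with h1 | h1 | h1
    · exact ⟨x, y, h1, rfl⟩
    · exact absurd (Fin.ext h1) h
    · exact ⟨y, x, h1, Sym2.eq_swap⟩

open Classical in
/-- All edges of a triangulation, as a family of natural number chords. -/
noncomputable def toF {n : ℕ} (t : Finset (Sym2 (Fin (n + 2)))) : Finset (ℕ × ℕ) :=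
  ((univ : Finset (Fin (n + 2) × Fin (n + 2))).filter
    (fun x => x.1.val < x.2.val ∧ (IsSide s(x.1, x.2) ∨ s(x.1, x.2) ∈ t))).image
      (fun x => (x.1.val, x.2.val))

open Classical in
/-- The diagonals of a family. -/
noncomputable def ofF (n : ℕ) (F : Finset (ℕ × ℕ)) : Finset (Sym2 (Fin (n + 2))) :=
  univ.filter (fun e => IsDiagonal e ∧ ∃ a b : Fin (n + 2), a.val < b.val ∧ e = s(a, b) ∧
    (a.val, b.val) ∈ F)

lemma mem_toF {n : ℕ} {t : Finset (Sym2 (Fin (n + 2)))} {a b : Fin (n + 2)} :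
    (a.val, b.val) ∈ toF t ↔ a.val < b.val ∧ (IsSide s(a, b) ∨ s(a, b) ∈ t) := by
  simp only [toF, mem_image, mem_filter, mem_univ, true_and, Prod.mk.injEq, Prod.exists]
  constructor
  · rintro ⟨x, y, h, hx, hy⟩
    rw [Fin.ext hx, Fin.ext hy] at h
    exact h
  · intro h
    exact ⟨a, b, h, rfl, rfl⟩

lemma toF_bd {n : ℕ} {t : Finset (Sym2 (Fin (n + 2)))} {a b : ℕ} (h : (a, b) ∈ toF t) :
    ∃ x y : Fin (n + 2), x.val = a ∧ y.val = b := by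
  simp only [toF, mem_image, mem_filter, mem_univ, true_and, Prod.mk.injEq, Prod.exists] at h
  obtain ⟨x, y, -, hx, hy⟩ := h
  exact ⟨x, y, hx, hy⟩

lemma mem_ofF {n : ℕ} {F : Finset (ℕ × ℕ)} {a b : Fin (n + 2)} (hab : a.val < b.val) :
    s(a, b) ∈ ofF n F ↔ IsDiagonal s(a, b) ∧ (a.val, b.val) ∈ F := by
  simp only [ofF, mem_filter, mem_univ, true_and]
  refine and_congr_right fun _ => ?_
  constructor
  · rintro ⟨x, y, hxy, h, hF⟩
    rcases Sym2.eq_iff.1 h with ⟨rfl, rfl⟩ | ⟨rfl, rfl⟩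
    · exact hF
    · omega
  · intro h
    exact ⟨a, b, hab, rfl, h⟩

lemma ofF_diag {n : ℕ} {F : Finset (ℕ × ℕ)} {e : Sym2 (Fin (n + 2))} (h : e ∈ ofF n F) :
    IsDiagonal e := by
  simp only [ofF, mem_filter] at h
  exact h.2.1

lemma side_nc {n : ℕ} {a b : Fin (n + 2)} (hab : a.val < b.val) (h : IsSide s(a, b))
    {c d : Fin (n + 2)} : ¬ Cr a b c d := by
  rw [isSide_iff, polyAdj_iff hab] at h
  have := c.2
  have := d.2
  unfold Cr
  omega

lemma Cr_comm {a b c d : ℕ} : Cr a b c d ↔ Cr c d a b := by unfold Cr; omega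

lemma toF_isMT {n : ℕ} {t : Finset (Sym2 (Fin (n + 2)))} (ht : IsTriangulation n t) :
    IsMT 0 (n + 1) (toF t) := by
  obtain ⟨h1, h2, h3⟩ := ht
  intro a b
  constructor
  · intro hab
    obtain ⟨x, y, rfl, rfl⟩ := toF_bd hab
    have hx := mem_toF.1 hab
    refine ⟨by omega, hx.1, by omega, fun c d hcd => ?_⟩
    obtain ⟨z, w, rfl, rfl⟩ := toF_bd hcd
    have hz := mem_toF.1 hcd
    rcases hx.2 with hs | hx2
    · exact side_nc hx.1 hs
    rcases hz.2 with hs | hz2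
    · rw [Cr_comm]; exact side_nc hz.1 hs
    rw [← crosses_iff hx.1 hz.1]
    exact h2 _ hx2 _ hz2
  · rintro ⟨-, hab, hb, H⟩
    obtain ⟨x, rfl⟩ : ∃ x : Fin (n + 2), x.val = a := ⟨⟨a, by omega⟩, rfl⟩
    obtain ⟨y, rfl⟩ : ∃ x : Fin (n + 2), x.val = b := ⟨⟨b, by omega⟩, rfl⟩
    refine mem_toF.2 ⟨hab, ?_⟩
    by_cases hs : IsSide s(x, y)
    · exact Or.inl hs
    right
    refine h3 _ ((isDiagonal_iff hab).2 hs) fun f hf => ?_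
    obtain ⟨z, w, hzw, rfl⟩ := sym2_rep f (h1 f hf).1
    rw [crosses_iff hab hzw]
    exact H _ _ (mem_toF.2 ⟨hzw, Or.inr hf⟩)

lemma ofF_isTri {n : ℕ} {F : Finset (ℕ × ℕ)} (h : IsMT 0 (n + 1) F) :
    IsTriangulation n (ofF n F) := by
  refine ⟨fun e he => ofF_diag he, fun e he f hf => ?_, fun e he H => ?_⟩
  · obtain ⟨x, y, hxy, rfl⟩ := sym2_rep e (ofF_diag he).1
    obtain ⟨z, w, hzw, rfl⟩ := sym2_rep f (ofF_diag hf).1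
    rw [mem_ofF hxy] at he
    rw [mem_ofF hzw] at hf
    rw [crosses_iff hxy hzw]
    exact h.nc he.2 hf.2
  · obtain ⟨x, y, hxy, rfl⟩ := sym2_rep e he.1
    rw [mem_ofF hxy]
    refine ⟨he, (h _ _).2 ⟨by omega, hxy, by omega, fun c d hcd => ?_⟩⟩
    have hb := h.bd hcd
    obtain ⟨z, rfl⟩ : ∃ x : Fin (n + 2), x.val = c := ⟨⟨c, by omega⟩, rfl⟩
    obtain ⟨w, rfl⟩ : ∃ x : Fin (n + 2), x.val = d := ⟨⟨d, by omega⟩, rfl⟩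
    by_cases hs : IsSide s(z, w)
    · rw [Cr_comm]; exact side_nc hb.2.1 hs
    rw [← crosses_iff hxy hb.2.1]
    exact H _ ((mem_ofF hb.2.1).2 ⟨(isDiagonal_iff hb.2.1).2 hs, hcd⟩)

lemma IsMT.of_side {n : ℕ} {F : Finset (ℕ × ℕ)} (h : IsMT 0 (n + 1) F) {a b : Fin (n + 2)}
    (hab : a.val < b.val) (hs : IsSide s(a, b)) : (a.val, b.val) ∈ F := by
  rw [isSide_iff, polyAdj_iff hab] at hs
  rcases hs with hs | ⟨h1, h2⟩
  · rw [hs]; exact h.side (by omega) (by omega)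
  · rw [h1, h2]; exact h.base (by omega)

lemma toF_ofF {n : ℕ} {F : Finset (ℕ × ℕ)} (h : IsMT 0 (n + 1) F) : toF (ofF n F) = F := by
  ext ⟨a, b⟩
  constructor
  · intro hab
    obtain ⟨x, y, rfl, rfl⟩ := toF_bd hab
    rw [mem_toF] at hab
    rcases hab.2 with hs | hm
    · exact h.of_side hab.1 hs
    · exact ((mem_ofF hab.1).1 hm).2
  · intro hF
    have hb := h.bd hF
    obtain ⟨x, rfl⟩ : ∃ x : Fin (n + 2), x.val = a := ⟨⟨a, by omega⟩, rfl⟩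
    obtain ⟨y, rfl⟩ : ∃ x : Fin (n + 2), x.val = b := ⟨⟨b, by omega⟩, rfl⟩
    rw [mem_toF, mem_ofF hb.2.1, isDiagonal_iff hb.2.1]
    exact ⟨hb.2.1, by tauto⟩

lemma ofF_toF {n : ℕ} {t : Finset (Sym2 (Fin (n + 2)))} (ht : IsTriangulation n t) :
    ofF n (toF t) = t := by
  ext e
  constructor
  · intro he
    have hd := ofF_diag he
    obtain ⟨x, y, hxy, rfl⟩ := sym2_rep e hd.1
    rw [mem_ofF hxy, mem_toF] at he
    rw [isDiagonal_iff hxy] at hd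
    tauto
  · intro he
    have hd := ht.1 e he
    obtain ⟨x, y, hxy, rfl⟩ := sym2_rep e hd.1
    rw [mem_ofF hxy, mem_toF]
    exact ⟨hd, hxy, Or.inr he⟩

/-- The equivalence between triangulations and maximal families. -/
noncomputable def triEquiv (n : ℕ) : Triangulation n ≃ {F // F ∈ MT 0 (n + 1)} where
  toFun t := ⟨toF t.1, mem_MT.2 (toF_isMT t.2)⟩
  invFun F := ⟨ofF n F.1, ofF_isTri (mem_MT.1 F.2)⟩
  left_inv t := Subtype.ext (ofF_toF t.2)
  right_inv F := Subtype.ext (toF_ofF (mem_MT.1 F.2))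

lemma card_tri (n : ℕ) : Nat.card (Triangulation n) = catalan n := by
  rw [Nat.card_congr (triEquiv n), Nat.card_eq_fintype_card, Fintype.card_coe,
    card_MT' (by omega)]
  congr 1

lemma edgeOfT_iff {n : ℕ} (t : Triangulation n) {a b : Fin (n + 2)} (hab : a.val < b.val) :
    EdgeOfT t s(a, b) ↔ (a.val, b.val) ∈ toF t.1 := by
  rw [mem_toF, EdgeOfT]
  tauto

open scoped Fin.NatCast in
lemma mem_orientedClass {n p : ℕ} (hp : 1 ≤ p) (hpn : p ≤ n) (t : Triangulation n) :
    t ∈ orientedClass n p ↔ toF t.1 ∈ AP 0 p (n + 1) := by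
  have hpv : ((p : ℕ) : Fin (n + 2)).val = p := by
    rw [Fin.val_natCast, Nat.mod_eq_of_lt (by omega)]
  have hnv : ((n + 1 : ℕ) : Fin (n + 2)).val = n + 1 := by
    rw [Fin.val_natCast, Nat.mod_eq_of_lt (by omega)]
  have h0 : (0 : Fin (n + 2)).val = 0 := rfl
  have hmt := toF_isMT t.2
  rw [mem_AP]
  simp only [orientedClass, Set.mem_setOf_eq, IsTriangleOf]
  rw [edgeOfT_iff t (by omega), edgeOfT_iff t (by omega), edgeOfT_iff t (by omega), hpv, hnv, h0]
  have hb := hmt.base (by omega)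
  have e1 : (0 : Fin (n + 2)) ≠ ((p : ℕ) : Fin (n + 2)) := fun h => by
    have := congrArg Fin.val h; omega
  have e2 : ((p : ℕ) : Fin (n + 2)) ≠ ((n + 1 : ℕ) : Fin (n + 2)) := fun h => by
    have := congrArg Fin.val h; omega
  have e3 : (0 : Fin (n + 2)) ≠ ((n + 1 : ℕ) : Fin (n + 2)) := fun h => by
    have := congrArg Fin.val h; omega
  tauto

lemma toF_inj {n : ℕ} {t t' : Triangulation n} (h : toF t.1 = toF t'.1) : t = t' :=
  (triEquiv n).injective (Subtype.ext h)

lemma card_orientedClass {n p : ℕ} (hp : 1 ≤ p) (hpn : p ≤ n) :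
    (orientedClass n p).ncard = catalan (p - 1) * catalan (n - p) := by
  have : (orientedClass n p).ncard = (AP 0 p (n + 1) : Set (Finset (ℕ × ℕ))).ncard := by
    refine Set.ncard_congr (fun t _ => toF t.1) ?_ ?_ ?_
    · intro t ht
      exact (mem_orientedClass hp hpn t).1 ht
    · intro t t' _ _ h
      exact toF_inj h
    · intro F hF
      have hF' := mem_AP.1 hF
      refine ⟨⟨ofF n F, ofF_isTri hF'.1⟩, ?_, toF_ofF hF'.1⟩
      refine (mem_orientedClass hp hpn _).2 ?_
      change toF (ofF n F) ∈ _
      rw [toF_ofF hF'.1]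
      exact hF
  rw [this, Set.ncard_coe_finset, card_AP (by omega) (by omega), card_MT' (by omega),
    card_MT' (by omega)]
  congr 2
  omega

lemma diff_card {n : ℕ} {F G : Finset (ℕ × ℕ)} {a b : ℕ} (ha : a < b) (hb : b ≤ n + 1)
    (hs : ¬ (b = a + 1 ∨ (a = 0 ∧ b = n + 1)))
    (h : ∀ c d, ((c, d) ∈ F ∧ (c, d) ∉ G) ↔ (c = a ∧ d = b)) :
    (ofF n F \ ofF n G).card = 1 := by
  rw [card_eq_one]
  obtain ⟨x, rfl⟩ : ∃ x : Fin (n + 2), x.val = a := ⟨⟨a, by omega⟩, rfl⟩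
  obtain ⟨y, rfl⟩ : ∃ x : Fin (n + 2), x.val = b := ⟨⟨b, by omega⟩, rfl⟩
  have hd : IsDiagonal s(x, y) := by
    rw [isDiagonal_iff ha, isSide_iff, polyAdj_iff ha]; exact hs
  refine ⟨s(x, y), ?_⟩
  ext e
  rw [mem_sdiff, mem_singleton]
  constructor
  · rintro ⟨h1, h2⟩
    obtain ⟨z, w, hzw, rfl⟩ := sym2_rep e (ofF_diag h1).1
    rw [mem_ofF hzw] at h1 h2
    have := (h z w).1 ⟨h1.2, fun h3 => h2 ⟨h1.1, h3⟩⟩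
    rw [Fin.ext this.1, Fin.ext this.2]
  · rintro rfl
    rw [mem_ofF ha, mem_ofF ha]
    have := (h x y).2 ⟨rfl, rfl⟩
    tauto

set_option maxHeartbeats 1000000 in
lemma edges_lower {n p q : ℕ} (hp : 1 ≤ p) (hpq : p < q) (hqn : q ≤ n) :
    catalan (p - 1) * catalan (q - p - 1) * catalan (n - q) ≤ (edgesBetween n p q).ncard := by
  have hcard : (((MT 0 p ×ˢ MT p q) ×ˢ MT q (n + 1) :
      Finset ((Finset (ℕ × ℕ) × Finset (ℕ × ℕ)) × Finset (ℕ × ℕ))) : Set ((Finset (ℕ × ℕ) × Finset (ℕ × ℕ)) × Finset (ℕ × ℕ))).ncard =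
      catalan (p - 1) * catalan (q - p - 1) * catalan (n - q) := by
    rw [Set.ncard_coe_finset, card_product, card_product, card_MT' (by omega),
      card_MT' (by omega), card_MT' (by omega)]
    congr 2
    omega
  rw [← hcard]
  let U : (Finset (ℕ × ℕ) × Finset (ℕ × ℕ)) × Finset (ℕ × ℕ) → Finset (ℕ × ℕ) :=
    fun X => glue 0 (n + 1) X.1.1 (glue p (n + 1) X.1.2 X.2)
  let V : (Finset (ℕ × ℕ) × Finset (ℕ × ℕ)) × Finset (ℕ × ℕ) → Finset (ℕ × ℕ) :=
    fun X => glue 0 (n + 1) (glue 0 q X.1.1 X.1.2) X.2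
  have hmem : ∀ X : (Finset (ℕ × ℕ) × Finset (ℕ × ℕ)) × Finset (ℕ × ℕ),
      X ∈ (((MT 0 p ×ˢ MT p q) ×ˢ MT q (n + 1) :
      Finset ((Finset (ℕ × ℕ) × Finset (ℕ × ℕ)) × Finset (ℕ × ℕ))) : Set ((Finset (ℕ × ℕ) × Finset (ℕ × ℕ)) × Finset (ℕ × ℕ))) ↔
        (IsMT 0 p X.1.1 ∧ IsMT p q X.1.2) ∧ IsMT q (n + 1) X.2 := by
    intro X
    simp only [mem_coe, mem_product, mem_MT]
  have hU : ∀ X, ((IsMT 0 p X.1.1 ∧ IsMT p q X.1.2) ∧ IsMT q (n + 1) X.2) →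
      IsMT 0 (n + 1) (U X) := fun X h =>
    h.1.1.glue (h.1.2.glue h.2 hpq (by omega)) (by omega) (by omega)
  have hV : ∀ X, ((IsMT 0 p X.1.1 ∧ IsMT p q X.1.2) ∧ IsMT q (n + 1) X.2) →
      IsMT 0 (n + 1) (V X) := fun X h =>
    (h.1.1.glue h.1.2 (by omega) (by omega)).glue h.2 (by omega) (by omega)
  have hUA : ∀ X, ((IsMT 0 p X.1.1 ∧ IsMT p q X.1.2) ∧ IsMT q (n + 1) X.2) →
      U X ∈ AP 0 p (n + 1) := fun X h => by
    refine mem_AP.2 ⟨hU X h, mem_glue.2 (Or.inr (Or.inl (h.1.1.base (by omega)))), 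
      mem_glue.2 (Or.inr (Or.inr (mem_glue.2 (Or.inl ⟨rfl, rfl⟩))))⟩
  have hVA : ∀ X, ((IsMT 0 p X.1.1 ∧ IsMT p q X.1.2) ∧ IsMT q (n + 1) X.2) →
      V X ∈ AP 0 q (n + 1) := fun X h => by
    refine mem_AP.2 ⟨hV X h, mem_glue.2 (Or.inr (Or.inl (mem_glue.2 (Or.inl ⟨rfl, rfl⟩)))), 
      mem_glue.2 (Or.inr (Or.inr (h.2.base (by omega))))⟩
  have htri : ∀ F : Finset (ℕ × ℕ), ∃ t : Triangulation n, IsMT 0 (n + 1) F →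
      t.1 = ofF n F ∧ toF t.1 = F := by
    intro F
    by_cases h : IsMT 0 (n + 1) F
    · exact ⟨⟨ofF n F, ofF_isTri h⟩, fun _ => ⟨rfl, toF_ofF h⟩⟩
    · have : 0 < Nat.card (Triangulation n) := by rw [card_tri]; exact catalan_pos' n
      have := (Nat.card_pos_iff.1 this).1
      exact ⟨Classical.choice this, fun h' => absurd h' h⟩
  choose T hT using htri
  refine Set.ncard_le_ncard_of_injOn (fun X => s(T (U X), T (V X))) ?_ ?_ (Set.toFinite _)
  · intro X hX
    have h := (hmem X).1 hX
    have tU := hT _ (hU X h)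
    have tV := hT _ (hV X h)
    refine ⟨?_, T (U X), T (V X), rfl, ?_, ?_⟩
    · rw [SimpleGraph.mem_edgeSet]
      change ((T (U X)).1 \ (T (V X)).1).card = 1 ∧ ((T (V X)).1 \ (T (U X)).1).card = 1
      rw [tU.1, tV.1]
      constructor
      · refine diff_card (a := p) (b := n + 1) (by omega) (by omega) (by omega) fun c d => ?_
        simp only [U, V, mem_glue]
        have b1 := fun hh => h.1.1.bd (a := c) (b := d) hh
        have b2 := fun hh => h.1.2.bd (a := c) (b := d) hh
        have b3 := fun hh => h.2.bd (a := c) (b := d) hh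
        constructor
        · rintro ⟨h1 | h1 | h1 | h1 | h1, h2⟩
          · exact absurd (Or.inl h1) h2
          · exact absurd (Or.inr (Or.inl (Or.inr (Or.inl h1)))) h2
          · exact h1
          · exact absurd (Or.inr (Or.inl (Or.inr (Or.inr h1)))) h2
          · exact absurd (Or.inr (Or.inr h1)) h2
        · rintro ⟨rfl, rfl⟩
          refine ⟨Or.inr (Or.inr (Or.inl ⟨rfl, rfl⟩)), ?_⟩
          rintro (h1 | (h1 | h1 | h1) | h1)
          · omega
          · omega
          · have := b1 h1; omega
          · have := b2 h1; omega
          · have := b3 h1; omega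
      · refine diff_card (a := 0) (b := q) (by omega) (by omega) (by omega) fun c d => ?_
        simp only [U, V, mem_glue]
        have b1 := fun hh => h.1.1.bd (a := c) (b := d) hh
        have b2 := fun hh => h.1.2.bd (a := c) (b := d) hh
        have b3 := fun hh => h.2.bd (a := c) (b := d) hh
        constructor
        · rintro ⟨h1 | (h1 | h1 | h1) | h1, h2⟩
          · exact absurd (Or.inl h1) h2
          · exact h1
          · exact absurd (Or.inr (Or.inl h1)) h2
          · exact absurd (Or.inr (Or.inr (Or.inr (Or.inl h1)))) h2
          · exact absurd (Or.inr (Or.inr (Or.inr (Or.inr h1)))) h2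
        · rintro ⟨rfl, rfl⟩
          refine ⟨Or.inr (Or.inl (Or.inl ⟨rfl, rfl⟩)), ?_⟩
          rintro (h1 | h1 | h1 | h1 | h1)
          · omega
          · have := b1 h1; omega
          · omega
          · have := b2 h1; omega
          · have := b3 h1; omega
    · rw [mem_orientedClass hp (by omega), tU.2]
      exact hUA X h
    · rw [mem_orientedClass (by omega) hqn, tV.2]
      exact hVA X h
  · intro X hX Y hY hXY
    have h := (hmem X).1 hX
    have h' := (hmem Y).1 hY
    have e : U X = U Y := by
      rcases Sym2.eq_iff.1 hXY with ⟨h1, -⟩ | ⟨h1, -⟩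
      · rw [← (hT _ (hU X h)).2, h1, (hT _ (hU Y h')).2]
      · exfalso
        have h2 : U X = V Y := by rw [← (hT _ (hU X h)).2, h1, (hT _ (hV Y h')).2]
        have h3 := hUA X h
        rw [h2] at h3
        have := AP_unique h3 (hVA Y h')
        omega
    have g := h.1.2.glue h.2 hpq (by omega)
    have g' := h'.1.2.glue h'.2 hpq (by omega)
    have e1 : X.1.1 = Y.1.1 := by
      rw [← res_glue_left h.1.1 g (by omega), ← res_glue_left h'.1.1 g' (by omega)]
      exact congrArg _ e
    have e2 : glue p (n + 1) X.1.2 X.2 = glue p (n + 1) Y.1.2 Y.2 := by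
      rw [← res_glue_right h.1.1 g (by omega), ← res_glue_right h'.1.1 g' (by omega)]
      exact congrArg _ e
    have e3 : X.1.2 = Y.1.2 := by
      rw [← res_glue_left h.1.2 h.2 (by omega), ← res_glue_left h'.1.2 h'.2 (by omega), e2]
    have e4 : X.2 = Y.2 := by
      rw [← res_glue_right h.1.2 h.2 hpq, ← res_glue_right h'.1.2 h'.2 hpq, e2]
    exact Prod.ext (Prod.ext e1 e3) e4

lemma edgesBetween_comm (n p q : ℕ) : edgesBetween n p q = edgesBetween n q p := by
  ext e
  constructor <;>
  · rintro ⟨h, u, v, rfl, hu, hv⟩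
    exact ⟨h, v, u, Sym2.eq_swap, hv, hu⟩

lemma main_lt {n p q : ℕ} (hp : 1 ≤ p) (hpq : p < q) (hqn : q ≤ n) :
    (orientedClass n p).ncard * (orientedClass n q).ncard ≤
      (edgesBetween n p q).ncard * Nat.card (Triangulation n) := by
  rw [card_orientedClass hp (by omega), card_orientedClass (by omega) hqn, card_tri]
  have h1 := edges_lower hp hpq hqn
  have h2 := catalan_logconvex (q - p - 1) (n - p) p (by omega)
  rw [show q - p - 1 + p = q - 1 by omega, show n - p + p = n by omega] at h2
  calc catalan (p - 1) * catalan (n - p) * (catalan (q - 1) * catalan (n - q))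
      = (catalan (p - 1) * catalan (n - q)) * (catalan (q - 1) * catalan (n - p)) := by ring
    _ ≤ (catalan (p - 1) * catalan (n - q)) * (catalan (q - p - 1) * catalan n) :=
        Nat.mul_le_mul_left _ h2
    _ = (catalan (p - 1) * catalan (q - p - 1) * catalan (n - q)) * catalan n := by ring
    _ ≤ _ := Nat.mul_le_mul_right _ h1

/-- for every `n ≥ 2` and all `p ≠ q` with `1 ≤ p, q ≤ n`, the number of
edges of `K_n` between `Θ_{T_p}` and `Θ_{T_q}` is at least `|Θ_{T_p}|·|Θ_{T_q}|/C_n`,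
where `C_n = |V(K_n)|` is the number of triangulations of the convex `(n+2)`-gon. -/
theorem edgesBetween_card_lower_bound (n p q : ℕ) (hn : 2 ≤ n) (hp : 1 ≤ p) (hpn : p ≤ n)
    (hq : 1 ≤ q) (hqn : q ≤ n) (hpq : p ≠ q) :
    ((orientedClass n p).ncard : ℝ) * ((orientedClass n q).ncard : ℝ) /
        (Nat.card (Triangulation n) : ℝ) ≤
      ((edgesBetween n p q).ncard : ℝ) := by
  have key : (orientedClass n p).ncard * (orientedClass n q).ncard ≤
      (edgesBetween n p q).ncard * Nat.card (Triangulation n) := by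
    rcases lt_or_gt_of_ne hpq with h | h
    · exact main_lt hp h hqn
    · rw [mul_comm (orientedClass n p).ncard, edgesBetween_comm]
      exact main_lt hq h hpn
  have hpos : (0 : ℝ) < (Nat.card (Triangulation n) : ℝ) := by
    rw [card_tri]; exact_mod_cast catalan_pos' n
  rw [div_le_iff₀ hpos]
  exact_mod_cast key
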